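/- Let d ≥ 1, q > 1/2, δ > 0 and y ∈ ℝ^d. For every smooth function u : ℝ^d → ℂ all of whose derivatives are bounded, the following integration-by-parts identity holds: ∫ φ_{δ,y} |u|^{2q} · conj(u) · Δu dx = −∫ |u|^{2q} conj(u) (∇φ_{δ,y} · ∇u) dx − (q+1) ∫ φ_{δ,y} |u|^{2q} |∇u|² dx − q ∫ φ_{δ,y} |u|^{2q−2} conj(u)² (∇u · ∇u) dx, where ∇u · ∇u = Σ_j (∂_j u)², |∇u|² = Σ_j |∂_j u|², and the integrand of the last integral is defined to be 0 at points where u vanishes. -/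

import Mathlib

open Complex

/-- The weight function `φ_{δ,y}(x) = exp(−√(1+δ²|x−y|²))` on `ℝ^d`. -/
noncomputable def phi (d : ℕ) (δ : ℝ) (y x : EuclideanSpace ℝ (Fin d)) : ℝ :=
  Real.exp (-Real.sqrt (1 + δ ^ 2 * ‖x - y‖ ^ 2))

/-- The Laplacian `Δu(x) = Σ_j ∂²_j u(x)` of `u : ℝ^d → ℂ`. -/
noncomputable def lap (d : ℕ) (u : EuclideanSpace ℝ (Fin d) → ℂ)
    (x : EuclideanSpace ℝ (Fin d)) : ℂ :=
  ∑ j : Fin d, iteratedFDeriv ℝ 2 u x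
    ![EuclideanSpace.single j (1 : ℝ), EuclideanSpace.single j (1 : ℝ)]

/-!
For `q ≥ 0` the map `z ↦ |z|^{2q} z̄` is real-differentiable everywhere, including at `0`. Since
`2 Re (z̄ w) = z̄ w + z w̄`, its derivative at `z` in direction `w`, multiplied by `w`, equals
`(q + 1) |z|^{2q} |w|² + q |z|^{2q-2} z̄² w²`. With `z = u` and `w = ∂_v u`, this says how
`∂_v (φ |u|^{2q} ū) ∂_v u` splits into the three terms on the right. One integrates by parts in each
direction `v` and sums; there is no boundary term, because `φ` and `∂_v φ` are integrable while `u`,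
`∂_v u` and `∂_v² u` are bounded.
-/

open MeasureTheory Filter Topology
open scoped ENNReal ComplexConjugate

section NormRpow

variable {E F : Type*} [NormedAddCommGroup E] [NormedAddCommGroup F] [NormedSpace ℝ F]

lemma mul_norm_rpow_sub_two_mul_norm_sq (p : ℝ) (x : E) :
    p * (‖x‖ ^ (p - 2) * ‖x‖ ^ 2) = p * ‖x‖ ^ p := by
  rcases eq_or_ne x 0 with rfl | hx
  · rcases eq_or_ne p 0 with rfl | hp <;> simp [*]
  · rw [← Real.rpow_add_natCast (norm_ne_zero_iff.2 hx), Nat.cast_ofNat, sub_add_cancel]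

lemma norm_rpow_sub_two_mul_norm_sq_le (p : ℝ) (x : E) :
    ‖x‖ ^ (p - 2) * ‖x‖ ^ 2 ≤ ‖x‖ ^ p := by
  rcases eq_or_ne x 0 with rfl | hx
  · rw [norm_zero, zero_pow two_ne_zero, mul_zero]
    positivity
  · rw [← Real.rpow_add_natCast (norm_ne_zero_iff.2 hx), Nat.cast_ofNat, sub_add_cancel]

lemma hasFDerivAt_smul_clm_zero [NormedSpace ℝ E] {c : E → ℝ} (hc : ContinuousAt c 0)
    (L : E →L[ℝ] F) : HasFDerivAt (fun x => c x • L x) (c 0 • L) 0 := by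
  have hc₀ : (fun x => c x - c 0) =o[𝓝 0] fun _ => (1 : ℝ) :=
    (Asymptotics.isLittleO_one_iff ℝ).2 (tendsto_sub_nhds_zero_iff.2 hc)
  refine .of_isLittleO ?_
  simpa [sub_smul] using hc₀.smul_isBigO (L.isBigO_id (𝓝 0))

variable [InnerProductSpace ℝ E]

lemma hasFDerivAt_norm_rpow_of_ne_zero {x : E} (hx : x ≠ 0) (p : ℝ) :
    HasFDerivAt (fun x : E => ‖x‖ ^ p) ((p * ‖x‖ ^ (p - 2)) • innerSL ℝ x) x := by
  have sq_rpow (r : ℝ) (x : E) : (‖x‖ ^ 2) ^ (r / 2) = ‖x‖ ^ r := by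
    rw [← Real.rpow_natCast_mul (norm_nonneg x), Nat.cast_ofNat, mul_div_cancel₀ r two_ne_zero]
  have h := (hasStrictFDerivAt_norm_sq x).hasFDerivAt.rpow_const (p := p / 2)
    (.inl (pow_ne_zero 2 (norm_ne_zero_iff.2 hx)))
  rw [show p / 2 - 1 = (p - 2) / 2 by ring] at h
  simp only [sq_rpow] at h
  refine h.congr_fderiv ?_
  module

lemma hasFDerivAt_norm_rpow_smul_clm {p : ℝ} (hp : 0 ≤ p) (L : E →L[ℝ] F) (x : E) :
    HasFDerivAt (fun x => ‖x‖ ^ p • L x)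
      (‖x‖ ^ p • L + ((p * ‖x‖ ^ (p - 2)) • innerSL ℝ x).smulRight (L x)) x := by
  rcases eq_or_ne x 0 with rfl | hx
  · simpa using hasFDerivAt_smul_clm_zero (c := fun x => ‖x‖ ^ p)
      (continuous_norm.rpow_const fun _ => .inr hp).continuousAt L
  · exact (hasFDerivAt_norm_rpow_of_ne_zero hx p).smul L.hasFDerivAt

end NormRpow

section ConjugatePower

lemma norm_rpow_smul_conj_add_mul (q : ℝ) (z w : ℂ) :
    (‖z‖ ^ (2 * q) • conj w + (2 * q * ‖z‖ ^ (2 * q - 2) * inner ℝ z w) • conj z) * w =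
      (q + 1) * (((‖z‖ ^ (2 * q) : ℝ) : ℂ) * ((‖w‖ ^ 2 : ℝ) : ℂ)) +
        q * (((‖z‖ ^ (2 * q - 2) : ℝ) : ℂ) * conj z ^ 2 * w ^ 2) := by
  have two_mul_inner : 2 * ((inner ℝ z w : ℝ) : ℂ) = conj z * w + z * conj w := by
    rw [Complex.inner, Complex.re_eq_add_conj, map_mul, conj_conj]
    ring
  have norm_sq_eq (z : ℂ) : ((‖z‖ ^ 2 : ℝ) : ℂ) = conj z * z := by
    rw [ofReal_pow, conj_mul']
  have hpow : (2 * q * (((‖z‖ ^ (2 * q - 2) : ℝ) : ℂ) * (conj z * z)) : ℂ) =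
      2 * q * ((‖z‖ ^ (2 * q) : ℝ) : ℂ) := by
    rw [← norm_sq_eq z]
    exact_mod_cast mul_norm_rpow_sub_two_mul_norm_sq (2 * q) z
  rw [norm_sq_eq, real_smul, real_smul]
  push_cast at hpow ⊢
  linear_combination (q : ℂ) * ((‖z‖ ^ (2 * q - 2) : ℝ) : ℂ) * conj z * w * two_mul_inner +
    conj w * w / 2 * hpow

variable {E : Type*} [NormedAddCommGroup E] [NormedSpace ℝ E] {q : ℝ} {φ : E → ℝ} {u : E → ℂ}
  {x : E}

lemma hasFDerivAt_ofReal_mul_norm_rpow_mul_conj (hq : 0 ≤ q) (hφ : DifferentiableAt ℝ φ x)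
    (hu : DifferentiableAt ℝ u x) :
    HasFDerivAt (fun x => (φ x : ℂ) * ((‖u x‖ ^ (2 * q) : ℝ) : ℂ) * conj (u x))
      (φ x • (‖u x‖ ^ (2 * q) • (conjCLE : ℂ →L[ℝ] ℂ) +
          ((2 * q * ‖u x‖ ^ (2 * q - 2)) • innerSL ℝ (u x)).smulRight (conj (u x))) ∘L
            fderiv ℝ u x +
        (fderiv ℝ φ x).smulRight (‖u x‖ ^ (2 * q) • conj (u x))) x := by
  have h := hφ.hasFDerivAt.smul ((hasFDerivAt_norm_rpow_smul_clm (p := 2 * q) (by positivity)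
    (conjCLE : ℂ →L[ℝ] ℂ) (u x)).comp x hu.hasFDerivAt)
  simpa only [Function.comp_apply, Pi.smul_def', ContinuousLinearEquiv.coe_coe, conjCLE_apply,
    real_smul, ← mul_assoc] using h

lemma fderiv_ofReal_mul_norm_rpow_mul_conj_mul_fderiv (hq : 0 ≤ q) (hφ : DifferentiableAt ℝ φ x)
    (hu : DifferentiableAt ℝ u x) (v : E) :
    fderiv ℝ (fun x => (φ x : ℂ) * ((‖u x‖ ^ (2 * q) : ℝ) : ℂ) * conj (u x)) x v *
        fderiv ℝ u x v =
      ((‖u x‖ ^ (2 * q) : ℝ) : ℂ) * conj (u x) * ((fderiv ℝ φ x v : ℂ) * fderiv ℝ u x v) +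
      (q + 1) * ((φ x : ℂ) * ((‖u x‖ ^ (2 * q) : ℝ) : ℂ) * ((‖fderiv ℝ u x v‖ ^ 2 : ℝ) : ℂ)) +
      q * ((φ x : ℂ) * ((‖u x‖ ^ (2 * q - 2) : ℝ) : ℂ) * conj (u x) ^ 2 *
        fderiv ℝ u x v ^ 2) := by
  have hderiv : fderiv ℝ (fun x => (φ x : ℂ) * ((‖u x‖ ^ (2 * q) : ℝ) : ℂ) * conj (u x)) x v =
      φ x * (‖u x‖ ^ (2 * q) • conj (fderiv ℝ u x v) +
          (2 * q * ‖u x‖ ^ (2 * q - 2) * inner ℝ (u x) (fderiv ℝ u x v)) • conj (u x)) +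
        fderiv ℝ φ x v * (((‖u x‖ ^ (2 * q) : ℝ) : ℂ) * conj (u x)) := by
    rw [(hasFDerivAt_ofReal_mul_norm_rpow_mul_conj hq hφ hu).fderiv]
    rfl
  rw [hderiv, add_mul, mul_assoc, norm_rpow_smul_conj_add_mul]
  ring

end ConjugatePower

section Integrability

variable {α E F : Type*} [MeasurableSpace α] {μ : Measure α} [NormedAddCommGroup E]

lemma memLp_top_comp_of_norm_le_rpow [MeasurableSpace E] [BorelSpace E] [NormedAddCommGroup F]
    [MeasurableSpace F] [OpensMeasurableSpace F] [SecondCountableTopology F] {N : E → F}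
    (hN : Measurable N) {r : ℝ} (hr : 0 ≤ r) (hNr : ∀ z, ‖N z‖ ≤ ‖z‖ ^ r)
    {u : α → E} (hu : MemLp u ∞ μ) : MemLp (fun x => N (u x)) ∞ μ := by
  refine memLp_top_of_bound
    (hN.comp_aemeasurable hu.aestronglyMeasurable.aemeasurable).aestronglyMeasurable
    ((eLpNormEssSup u μ).toReal ^ r) ?_
  filter_upwards [ae_le_eLpNormEssSup (f := u)] with x hx
  refine (hNr (u x)).trans (Real.rpow_le_rpow (norm_nonneg _) ?_ hr)
  rw [← toReal_enorm]
  exact ENNReal.toReal_mono (by simpa using hu.eLpNorm_ne_top) hx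

variable {p : ℝ} {w : α → ℝ} {u g : α → ℂ}

lemma integrable_mul_norm_rpow_mul (hp : 0 ≤ p) (hw : Integrable w μ) (hu : MemLp u ∞ μ)
    (hg : MemLp g ∞ μ) :
    Integrable (fun x => (w x : ℂ) * ((‖u x‖ ^ p : ℝ) : ℂ) * g x) μ := by
  have hpow : MemLp (fun x => ((‖u x‖ ^ p : ℝ) : ℂ)) ∞ μ :=
    memLp_top_comp_of_norm_le_rpow (N := fun z : ℂ => ((‖z‖ ^ p : ℝ) : ℂ)) (by fun_prop) hp
      (fun z => by rw [norm_real, Real.norm_of_nonneg (by positivity)]) hu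
  exact (hw.ofReal.mul_of_top_left hpow).mul_of_top_left hg

lemma integrable_mul_norm_rpow_mul_conj_mul (hp : 0 ≤ p) (hw : Integrable w μ)
    (hu : MemLp u ∞ μ) (hg : MemLp g ∞ μ) :
    Integrable (fun x => (w x : ℂ) * ((‖u x‖ ^ p : ℝ) : ℂ) * conj (u x) * g x) μ := by
  have hconj : MemLp (fun x => conj (u x)) ∞ μ := hu.star
  simpa only [mul_assoc] using integrable_mul_norm_rpow_mul hp hw hu (hg.mul' hconj)

lemma integrable_norm_rpow_mul_conj_mul_mul (hp : 0 ≤ p) (hw : Integrable w μ)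
    (hu : MemLp u ∞ μ) (hg : MemLp g ∞ μ) :
    Integrable (fun x => ((‖u x‖ ^ p : ℝ) : ℂ) * conj (u x) * ((w x : ℂ) * g x)) μ := by
  simpa only [mul_assoc, mul_left_comm] using integrable_mul_norm_rpow_mul_conj_mul hp hw hu hg

lemma integrable_mul_norm_rpow_mul_norm_sq (hp : 0 ≤ p) (hw : Integrable w μ)
    (hu : MemLp u ∞ μ) (hg : MemLp g ∞ μ) :
    Integrable (fun x => (w x : ℂ) * ((‖u x‖ ^ p : ℝ) : ℂ) * ((‖g x‖ ^ 2 : ℝ) : ℂ)) μ := by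
  have hconj : MemLp (fun x => conj (g x)) ∞ μ := hg.star
  simpa only [conj_mul', ofReal_pow] using integrable_mul_norm_rpow_mul hp hw hu (hg.mul' hconj)

lemma integrable_mul_norm_rpow_sub_two_mul_conj_sq_mul (hp : 0 ≤ p) (hw : Integrable w μ)
    (hu : MemLp u ∞ μ) (hg : MemLp g ∞ μ) :
    Integrable (fun x => (w x : ℂ) * ((‖u x‖ ^ (p - 2) : ℝ) : ℂ) * conj (u x) ^ 2 * g x) μ := by
  have hpow : MemLp (fun x => ((‖u x‖ ^ (p - 2) : ℝ) : ℂ) * conj (u x) ^ 2) ∞ μ :=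
    memLp_top_comp_of_norm_le_rpow (N := fun z : ℂ => ((‖z‖ ^ (p - 2) : ℝ) : ℂ) * conj z ^ 2)
      (by fun_prop) hp (fun z => by
        rw [norm_mul, norm_real, Real.norm_of_nonneg (by positivity), norm_pow, RCLike.norm_conj]
        exact norm_rpow_sub_two_mul_norm_sq_le p z) hu
  have h : Integrable (fun x =>
      (w x : ℂ) * (((‖u x‖ ^ (p - 2) : ℝ) : ℂ) * conj (u x) ^ 2) * g x) μ :=
    (hw.ofReal.mul_of_top_left hpow).mul_of_top_left hg
  simpa only [mul_assoc] using h

lemma memLp_top_iteratedFDeriv_apply [NormedSpace ℝ E] [MeasurableSpace E]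
    [OpensMeasurableSpace E] [NormedAddCommGroup F] [NormedSpace ℝ F]
    [SecondCountableTopologyEither E F] {ν : Measure E} {n : ℕ} {u : E → F} (hu : ContDiff ℝ n u)
    (hub : ∃ B : ℝ, ∀ x, ‖iteratedFDeriv ℝ n u x‖ ≤ B) (m : Fin n → E) :
    MemLp (fun x => iteratedFDeriv ℝ n u x m) ∞ ν := by
  obtain ⟨B, hB⟩ := hub
  have hcont : Continuous fun x => iteratedFDeriv ℝ n u x m :=
    ((ContinuousMultilinearMap.apply ℝ _ F m).continuous).comp
      (hu.continuous_iteratedFDeriv le_rfl)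
  exact memLp_top_of_bound hcont.aestronglyMeasurable (B * ∏ i, ‖m i‖)
    (.of_forall fun x => (iteratedFDeriv ℝ n u x).le_of_opNorm_le (hB x) m)

end Integrability

section Weight

lemma integrable_exp_neg_mul_norm {E : Type*} [NormedAddCommGroup E] [NormedSpace ℝ E]
    [FiniteDimensional ℝ E] [MeasurableSpace E] [BorelSpace E] {μ : Measure E}
    [μ.IsAddHaarMeasure] {c : ℝ} (hc : 0 < c) :
    Integrable (fun x => Real.exp (-c * ‖x‖)) μ := by
  set r : ℝ := Module.finrank ℝ E + 1
  have hlim : Tendsto (fun x : E => 1 + ‖x‖) (cocompact E) atTop :=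
    tendsto_atTop_add_const_left _ _ tendsto_norm_cocompact_atTop
  have hO : (fun x : E => Real.exp (-c * ‖x‖)) =O[cocompact E] fun x => (1 + ‖x‖) ^ (-r) := by
    have h := ((isLittleO_exp_neg_mul_rpow_atTop hc (-r)).comp_tendsto hlim).isBigO.const_mul_left
      (Real.exp c)
    refine h.congr_left fun x => ?_
    rw [Function.comp_apply, ← Real.exp_add]
    ring_nf
  have hcont : Continuous fun x : E => Real.exp (-c * ‖x‖) := by fun_prop
  exact hcont.locallyIntegrable.integrable_of_isBigO_cocompact hO
    ((integrable_one_add_norm (by simp [r])).integrableAtFilter _)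

lemma abs_mul_abs_le_sqrt_one_add (a b : ℝ) : |a| * |b| ≤ √(1 + a ^ 2 * b ^ 2) := by
  rw [← abs_mul, ← mul_pow]
  exact Real.abs_le_sqrt (le_add_of_nonneg_left zero_le_one)

variable {d : ℕ} {δ : ℝ} {y : EuclideanSpace ℝ (Fin d)}

lemma hasFDerivAt_phi (x : EuclideanSpace ℝ (Fin d)) :
    HasFDerivAt (phi d δ y)
      (-(phi d δ y x * (δ ^ 2 / √(1 + δ ^ 2 * ‖x - y‖ ^ 2))) • innerSL ℝ (x - y)) x := by
  have hpos : 0 < 1 + δ ^ 2 * ‖x - y‖ ^ 2 := by positivity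
  have h := ((((((hasFDerivAt_id x).sub_const y).norm_sq).const_mul (δ ^ 2)).const_add 1).sqrt
    hpos.ne').neg.exp
  refine HasFDerivAt.congr_fderiv h ?_
  ext w
  simp only [id_eq, Pi.neg_apply, one_div, mul_inv_rev, map_sub, ContinuousLinearMap.comp_id,
    smul_neg, neg_apply, smul_apply, sub_apply, coe_innerSL_apply, nsmul_eq_mul, Nat.cast_ofNat,
    smul_eq_mul, phi, neg_smul, neg_inj]
  ring

lemma norm_fderiv_phi_le (x : EuclideanSpace ℝ (Fin d)) :
    ‖fderiv ℝ (phi d δ y) x‖ ≤ |δ| * phi d δ y x := by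
  have hphi : 0 < phi d δ y x := Real.exp_pos _
  have hsqrt : 0 < √(1 + δ ^ 2 * ‖x - y‖ ^ 2) := by positivity
  rw [(hasFDerivAt_phi x).fderiv, norm_smul, innerSL_apply_norm, norm_neg,
    Real.norm_of_nonneg (by positivity)]
  calc phi d δ y x * (δ ^ 2 / √(1 + δ ^ 2 * ‖x - y‖ ^ 2)) * ‖x - y‖
      = |δ| * phi d δ y x * (|δ| * ‖x - y‖ / √(1 + δ ^ 2 * ‖x - y‖ ^ 2)) := by
        rw [← sq_abs δ]; ring
    _ ≤ |δ| * phi d δ y x * 1 := by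
        gcongr
        refine (div_le_one hsqrt).2 ?_
        simpa only [abs_norm] using abs_mul_abs_le_sqrt_one_add δ ‖x - y‖
    _ = |δ| * phi d δ y x := mul_one _

lemma differentiable_phi : Differentiable ℝ (phi d δ y) :=
  fun x => (hasFDerivAt_phi x).differentiableAt

lemma integrable_phi (hδ : δ ≠ 0) : Integrable (phi d δ y) := by
  have hexp := (integrable_exp_neg_mul_norm (μ := volume) (abs_pos.2 hδ)).comp_sub_right y
  refine hexp.mono' differentiable_phi.continuous.aestronglyMeasurable (.of_forall fun x => ?_)
  rw [phi, Real.norm_of_nonneg (Real.exp_nonneg _), neg_mul]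
  refine Real.exp_le_exp.2 (neg_le_neg ?_)
  simpa only [abs_norm] using abs_mul_abs_le_sqrt_one_add δ ‖x - y‖

lemma integrable_fderiv_phi_apply (hδ : δ ≠ 0) (v : EuclideanSpace ℝ (Fin d)) :
    Integrable fun x => fderiv ℝ (phi d δ y) x v := by
  refine (((integrable_phi (y := y) hδ).const_mul |δ|).mul_const ‖v‖).mono'
    (measurable_fderiv_apply_const ℝ _ v).aestronglyMeasurable (.of_forall fun x => ?_)
  exact (fderiv ℝ (phi d δ y) x).le_of_opNorm_le (norm_fderiv_phi_le x) v

end Weight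

section IntegrationByParts

variable {E : Type*} [NormedAddCommGroup E] [NormedSpace ℝ E]

lemma iteratedFDeriv_two_apply_eq_fderiv_fderiv {F : Type*} [NormedAddCommGroup F]
    [NormedSpace ℝ F] {u : E → F} (hu : ContDiff ℝ 2 u) (v : E) (x : E) :
    iteratedFDeriv ℝ 2 u x ![v, v] = fderiv ℝ (fun x => fderiv ℝ u x v) x v := by
  have hdu := (hu.fderiv_right (m := 1) one_add_one_eq_two.le).differentiable one_ne_zero
  rw [iteratedFDeriv_two_apply, fderiv_clm_apply (hdu x) (differentiableAt_const v)]
  simp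

variable [FiniteDimensional ℝ E] [MeasurableSpace E] [BorelSpace E] {μ : Measure E}
  [μ.IsAddHaarMeasure]

lemma integral_mul_norm_rpow_mul_conj_mul_iteratedFDeriv_two {q : ℝ} (hq : 0 ≤ q) {v : E}
    {φ : E → ℝ} (hφ : Differentiable ℝ φ) (hφ_int : Integrable φ μ)
    (hφ'_int : Integrable (fun x => fderiv ℝ φ x v) μ) {u : E → ℂ} (hu : ContDiff ℝ 2 u)
    (hu_bdd : MemLp u ∞ μ) (hu'_bdd : MemLp (fun x => fderiv ℝ u x v) ∞ μ)
    (hu''_bdd : MemLp (fun x => iteratedFDeriv ℝ 2 u x ![v, v]) ∞ μ) :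
    ∫ x, (φ x : ℂ) * ((‖u x‖ ^ (2 * q) : ℝ) : ℂ) * conj (u x) *
        iteratedFDeriv ℝ 2 u x ![v, v] ∂μ =
      -(∫ x, ((‖u x‖ ^ (2 * q) : ℝ) : ℂ) * conj (u x) *
          ((fderiv ℝ φ x v : ℂ) * fderiv ℝ u x v) ∂μ)
      - (q + 1) * (∫ x, (φ x : ℂ) * ((‖u x‖ ^ (2 * q) : ℝ) : ℂ) *
          ((‖fderiv ℝ u x v‖ ^ 2 : ℝ) : ℂ) ∂μ)
      - q * (∫ x, (φ x : ℂ) * ((‖u x‖ ^ (2 * q - 2) : ℝ) : ℂ) * conj (u x) ^ 2 *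
          fderiv ℝ u x v ^ 2 ∂μ) := by
  have hp : 0 ≤ 2 * q := by positivity
  have hu_diff : Differentiable ℝ u := hu.differentiable two_ne_zero
  have hu'_diff : Differentiable ℝ fun x => fderiv ℝ u x v :=
    ((hu.fderiv_right (m := 1) one_add_one_eq_two.le).differentiable one_ne_zero).clm_apply
      (differentiable_const v)
  have hcross := integrable_norm_rpow_mul_conj_mul_mul hp hφ'_int hu_bdd hu'_bdd
  have hnormSq :=
    (integrable_mul_norm_rpow_mul_norm_sq hp hφ_int hu_bdd hu'_bdd).const_mul (q + 1 : ℂ)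
  have hsq := (integrable_mul_norm_rpow_sub_two_mul_conj_sq_mul hp hφ_int hu_bdd
    (hu'_bdd.mul' hu'_bdd)).const_mul (q : ℂ)
  simp only [← sq] at hsq
  have hderiv (x : E) :=
    fderiv_ofReal_mul_norm_rpow_mul_conj_mul_fderiv hq (hφ x) (hu_diff x) v
  simp only [iteratedFDeriv_two_apply_eq_fderiv_fderiv hu] at hu''_bdd ⊢
  rw [integral_mul_fderiv_eq_neg_fderiv_mul_of_integrable
    (((hcross.add hnormSq).add hsq).congr (.of_forall fun x => (hderiv x).symm))
    (integrable_mul_norm_rpow_mul_conj_mul hp hφ_int hu_bdd hu''_bdd)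
    (integrable_mul_norm_rpow_mul_conj_mul hp hφ_int hu_bdd hu'_bdd)
    (fun x _ => (hasFDerivAt_ofReal_mul_norm_rpow_mul_conj hq (hφ x)
      (hu_diff x)).differentiableAt) (fun x _ => hu'_diff x)]
  simp only [hderiv]
  rw [integral_add (by exact hcross.add hnormSq) hsq, integral_add hcross hnormSq,
    integral_const_mul, integral_const_mul]
  ring

/-- Only derivatives of `u` and `φ` along the directions `v j` enter, so the Laplacian and the
gradient products may be replaced by the corresponding sums over any finite family of vectors. -/
theorem integration_by_parts_identity_general {ι : Type*} [Fintype ι] (v : ι → E) {q : ℝ}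
    (hq : 0 ≤ q) {φ : E → ℝ} (hφ : Differentiable ℝ φ) (hφ_int : Integrable φ μ)
    (hφ'_int : ∀ j, Integrable (fun x => fderiv ℝ φ x (v j)) μ) {u : E → ℂ}
    (hu : ContDiff ℝ 2 u) (hub : ∀ n ≤ 2, ∃ B : ℝ, ∀ x, ‖iteratedFDeriv ℝ n u x‖ ≤ B) :
    ∫ x, (φ x : ℂ) * ((‖u x‖ ^ (2 * q) : ℝ) : ℂ) * conj (u x) *
        ∑ j, iteratedFDeriv ℝ 2 u x ![v j, v j] ∂μ =
      -(∫ x, ((‖u x‖ ^ (2 * q) : ℝ) : ℂ) * conj (u x) *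
          (∑ j, (fderiv ℝ φ x (v j) : ℂ) * fderiv ℝ u x (v j)) ∂μ)
      - (q + 1) * (∫ x, (φ x : ℂ) * ((‖u x‖ ^ (2 * q) : ℝ) : ℂ) *
          ((∑ j, ‖fderiv ℝ u x (v j)‖ ^ 2 : ℝ) : ℂ) ∂μ)
      - q * (∫ x, if u x = 0 then (0 : ℂ) else
          (φ x : ℂ) * ((‖u x‖ ^ (2 * q - 2) : ℝ) : ℂ) * conj (u x) ^ 2 *
            (∑ j, fderiv ℝ u x (v j) ^ 2) ∂μ) := by
  have hp : 0 ≤ 2 * q := by positivity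
  have hu₀ : MemLp u ∞ μ :=
    memLp_top_iteratedFDeriv_apply (hu.of_le zero_le_two) (hub 0 zero_le_two) ![]
  have hu₁ (j : ι) : MemLp (fun x => fderiv ℝ u x (v j)) ∞ μ := by
    simpa only [iteratedFDeriv_one_apply] using
      memLp_top_iteratedFDeriv_apply (hu.of_le one_le_two) (hub 1 one_le_two) fun _ => v j
  have hu₂ (j : ι) : MemLp (fun x => iteratedFDeriv ℝ 2 u x ![v j, v j]) ∞ μ :=
    memLp_top_iteratedFDeriv_apply hu (hub 2 le_rfl) _
  have hu₁_sq (j : ι) : MemLp (fun x => fderiv ℝ u x (v j) ^ 2) ∞ μ := by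
    simpa only [sq] using (hu₁ j).mul' (hu₁ j)
  have drop_ite (x : E) : (if u x = 0 then (0 : ℂ) else
      (φ x : ℂ) * ((‖u x‖ ^ (2 * q - 2) : ℝ) : ℂ) * conj (u x) ^ 2 *
        (∑ j, fderiv ℝ u x (v j) ^ 2)) = (φ x : ℂ) * ((‖u x‖ ^ (2 * q - 2) : ℝ) : ℂ) *
          conj (u x) ^ 2 * (∑ j, fderiv ℝ u x (v j) ^ 2) :=
    ite_eq_right_iff.2 fun h => by simp [h]
  simp only [drop_ite]
  simp only [Finset.mul_sum, ofReal_sum]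
  rw [integral_finsetSum _ fun j _ =>
      integrable_mul_norm_rpow_mul_conj_mul hp hφ_int hu₀ (hu₂ j),
    integral_finsetSum _ fun j _ =>
      integrable_norm_rpow_mul_conj_mul_mul hp (hφ'_int j) hu₀ (hu₁ j),
    integral_finsetSum _ fun j _ =>
      integrable_mul_norm_rpow_mul_norm_sq hp hφ_int hu₀ (hu₁ j),
    integral_finsetSum _ fun j _ =>
      integrable_mul_norm_rpow_sub_two_mul_conj_sq_mul hp hφ_int hu₀ (hu₁_sq j),
    Finset.sum_congr rfl fun j _ => integral_mul_norm_rpow_mul_conj_mul_iteratedFDeriv_two hq hφ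
      hφ_int (hφ'_int j) hu hu₀ (hu₁ j) (hu₂ j)]
  simp only [Finset.sum_sub_distrib, Finset.sum_neg_distrib, Finset.mul_sum]

end IntegrationByParts

/-- Integration by parts identity:
`∫ φ |u|^{2q} conj(u) Δu = −∫ |u|^{2q} conj(u) (∇φ·∇u) − (q+1) ∫ φ |u|^{2q} |∇u|²
  − q ∫ φ |u|^{2q−2} conj(u)² (∇u·∇u)`,
where the last integrand is `0` wherever `u` vanishes. -/
theorem integration_by_parts_identity (d : ℕ) (hd : 1 ≤ d) (q : ℝ) (hq : 1 / 2 < q)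
    (δ : ℝ) (hδ : 0 < δ) (y : EuclideanSpace ℝ (Fin d))
    (u : EuclideanSpace ℝ (Fin d) → ℂ)
    (hu : ContDiff ℝ (⊤ : ℕ∞) u) (hub : ∀ n : ℕ, ∃ B : ℝ, ∀ x, ‖iteratedFDeriv ℝ n u x‖ ≤ B) :
    (∫ x, (phi d δ y x : ℂ) * ((‖u x‖ ^ (2 * q) : ℝ) : ℂ) *
        (starRingEnd ℂ) (u x) * lap d u x) =
      -(∫ x, ((‖u x‖ ^ (2 * q) : ℝ) : ℂ) * (starRingEnd ℂ) (u x) *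
          (∑ j : Fin d, ((fderiv ℝ (phi d δ y) x (EuclideanSpace.single j (1 : ℝ)) : ℝ) : ℂ) *
            fderiv ℝ u x (EuclideanSpace.single j (1 : ℝ))))
      - ((q : ℂ) + 1) * (∫ x, (phi d δ y x : ℂ) * ((‖u x‖ ^ (2 * q) : ℝ) : ℂ) *
          ((∑ j : Fin d, ‖fderiv ℝ u x (EuclideanSpace.single j (1 : ℝ))‖ ^ 2 : ℝ) : ℂ))
      - (q : ℂ) * (∫ x, if u x = 0 then (0 : ℂ) else
          (phi d δ y x : ℂ) * ((‖u x‖ ^ (2 * q - 2) : ℝ) : ℂ) * ((starRingEnd ℂ) (u x)) ^ 2 *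
            (∑ j : Fin d, (fderiv ℝ u x (EuclideanSpace.single j (1 : ℝ))) ^ 2)) := by
  exact integration_by_parts_identity_general (fun j => EuclideanSpace.single j (1 : ℝ))
    (by linarith) differentiable_phi (integrable_phi hδ.ne')
    (fun j => integrable_fderiv_phi_apply hδ.ne' _) (contDiff_infty.1 hu 2) fun n _ => hub n
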